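/- Let C be a category and M a class of morphisms of C containing all identity morphisms. Suppose a morphism e : A ⟶ B of C is equipped with a horizontally natural left M-lifting operation φ. Then for every m : X ⟶ Y in M and all u : A ⟶ X, v : B ⟶ Y with u ≫ m = e ≫ v, the morphism φ_m(u,v) is the unique diagonal filler: every t : B ⟶ X satisfying e ≫ t = u and t ≫ m = v is equal to φ_m(u,v). -/

import Mathlib

/-!
A filler `t` of the square `(u, v)` from `e` to `m` also fills the square `(u, t)` from `e` to
`𝟙 X`, where the lower triangle forces `φ` to choose `t` itself. The square `(𝟙 X, m)` from `𝟙 X`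
to `m` carries `(u, t)` to `(u, v)`, so by naturality `φ` makes the same choice for `(u, v)`.
-/

open CategoryTheory

universe v u

section

variable {C : Type u} [Category.{v} C] {M : MorphismProperty C} {A B : C} {e : A ⟶ B}

/-- A choice of diagonal for every commutative square from `e` to a member of `M`. Neither
triangle is required to commute, so that the two halves of the notion of a left `M`-lifting
operation on `e` can be imposed separately. -/
abbrev DiagonalOperation (M : MorphismProperty C) (e : A ⟶ B) : Type (max u v) :=
  ∀ ⦃X Y : C⦄ (m : X ⟶ Y), M m → ∀ (u : A ⟶ X) (v : B ⟶ Y), u ≫ m = e ≫ v → (B ⟶ X)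

/-- Horizontal naturality: the chosen diagonals are compatible with pasting a commutative square
between members of `M` to the right. -/
def IsHorizontallyNatural (φ : DiagonalOperation M e) : Prop :=
  ∀ ⦃X Y X' Y' : C⦄ (m : X ⟶ Y) (hm : M m) (m' : X' ⟶ Y') (hm' : M m')
    (s₀ : X ⟶ X') (s₁ : Y ⟶ Y') (_ : s₀ ≫ m' = m ≫ s₁)
    (u : A ⟶ X) (v : B ⟶ Y) (h : u ≫ m = e ≫ v) (h' : (u ≫ s₀) ≫ m' = e ≫ (v ≫ s₁)),
    φ m' hm' (u ≫ s₀) (v ≫ s₁) h' = φ m hm u v h ≫ s₀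

variable {φ : DiagonalOperation M e} {X Y : C} {m : X ⟶ Y}

theorem IsHorizontallyNatural.apply_comp_eq_apply_id (hφ : IsHorizontallyNatural φ) (hm : M m)
    (hX : M (𝟙 X)) {u : A ⟶ X} {t : B ⟶ X} (h : u ≫ m = e ≫ t ≫ m) (h' : u ≫ 𝟙 X = e ≫ t) :
    φ m hm u (t ≫ m) h = φ (𝟙 X) hX u t h' := by
  simpa only [Category.comp_id] using
    hφ (𝟙 X) hX m hm (𝟙 X) m rfl u t h' (by rwa [Category.comp_id])

theorem apply_id_eq_of_comp_eq
    (hφ : ∀ ⦃X Y : C⦄ (m : X ⟶ Y) (hm : M m) (u : A ⟶ X) (v : B ⟶ Y) (h : u ≫ m = e ≫ v),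
      φ m hm u v h ≫ m = v)
    (hX : M (𝟙 X)) {u : A ⟶ X} {t : B ⟶ X} (h : u ≫ 𝟙 X = e ≫ t) :
    φ (𝟙 X) hX u t h = t := by
  simpa only [Category.comp_id] using hφ (𝟙 X) hX u t h

theorem stmt1_general
    (hφ : ∀ ⦃X Y : C⦄ (m : X ⟶ Y) (hm : M m) (u : A ⟶ X) (v : B ⟶ Y) (h : u ≫ m = e ≫ v),
      φ m hm u v h ≫ m = v)
    (hnat : IsHorizontallyNatural φ) (hm : M m) (hX : M (𝟙 X))
    {u : A ⟶ X} {v : B ⟶ Y} (h : u ≫ m = e ≫ v) {t : B ⟶ X} (hu : e ≫ t = u) (hv : t ≫ m = v) :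
    t = φ m hm u v h := by
  subst hv
  have h' : u ≫ 𝟙 X = e ≫ t := by rw [Category.comp_id, hu]
  calc
    t = φ (𝟙 X) hX u t h' := (apply_id_eq_of_comp_eq hφ hX h').symm
    _ = φ m hm u (t ≫ m) h := (hnat.apply_comp_eq_apply_id hm hX h h').symm

end

/-- If a morphism `e : A ⟶ B` carries a horizontally natural left `M`-lifting
operation `φ`, where `M` contains all identities, then each `φ_m(u,v)` is the *unique*
diagonal filler of the corresponding square. -/
theorem stmt1 {C : Type u} [Category.{v} C] (M : MorphismProperty C)
    (hM : ∀ X : C, M (𝟙 X))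
    {A B : C} (e : A ⟶ B)
    (φ : ∀ ⦃X Y : C⦄ (m : X ⟶ Y), M m → ∀ (u : A ⟶ X) (v : B ⟶ Y), u ≫ m = e ≫ v → (B ⟶ X))
    (hφ₁ : ∀ ⦃X Y : C⦄ (m : X ⟶ Y) (hm : M m) (u : A ⟶ X) (v : B ⟶ Y) (h : u ≫ m = e ≫ v),
      e ≫ φ m hm u v h = u)
    (hφ₂ : ∀ ⦃X Y : C⦄ (m : X ⟶ Y) (hm : M m) (u : A ⟶ X) (v : B ⟶ Y) (h : u ≫ m = e ≫ v),
      φ m hm u v h ≫ m = v)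
    (hnat : ∀ ⦃X Y X' Y' : C⦄ (m : X ⟶ Y) (hm : M m) (m' : X' ⟶ Y') (hm' : M m')
      (s₀ : X ⟶ X') (s₁ : Y ⟶ Y') (_ : s₀ ≫ m' = m ≫ s₁)
      (u : A ⟶ X) (v : B ⟶ Y) (h : u ≫ m = e ≫ v)
      (h' : (u ≫ s₀) ≫ m' = e ≫ (v ≫ s₁)),
      φ m' hm' (u ≫ s₀) (v ≫ s₁) h' = φ m hm u v h ≫ s₀) :
    ∀ ⦃X Y : C⦄ (m : X ⟶ Y) (hm : M m) (u : A ⟶ X) (v : B ⟶ Y) (h : u ≫ m = e ≫ v)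
      (t : B ⟶ X), e ≫ t = u → t ≫ m = v → t = φ m hm u v h :=
  fun _ _ _ hm _ _ h _ hu hv ↦ stmt1_general hφ₂ hnat hm (hM _) h hu hv
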